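/- The number of maximal caps S in AG(4,3) whose anchor is the zero vector (equivalently, with ∑_{x∈S} x = 0) is exactly 8424. -/

import Mathlib

/-- A cap in `AG(n,3)`: a finite set of points of `Fin n → ZMod 3` containing no
three distinct collinear points (three distinct points are collinear iff they sum to zero). -/
def IsCap {n : ℕ} (C : Finset (Fin n → ZMod 3)) : Prop :=
  ∀ x ∈ C, ∀ y ∈ C, ∀ z ∈ C, x ≠ y → x ≠ z → y ≠ z → x + y + z ≠ 0

/-- A maximal cap: a cap of largest possible size. -/
def MaximalCap {n : ℕ} (C : Finset (Fin n → ZMod 3)) : Prop :=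
  IsCap C ∧ ∀ D : Finset (Fin n → ZMod 3), IsCap D → D.card ≤ C.card

/-!
Counting the solutions of `f ⬝ᵥ (x - y) = 0` and `f ⬝ᵥ (x + y + z) = 0` in a cap `S`, for all
functionals `f` together, fixes the second and third moments of the sizes of the hyperplane
sections of `S`. Sections have at most `9` points, and a combination of the two moments is then
extremal: a cap of `21` points would have sections of two types only, against parity (`f` and `-f`
have the same sections), and in a `20`-point cap with zero anchor every section shape attains the
bound. Hence such a cap `S` is symmetric, avoids `0`, has `2`, `6` or `8` points on each linear
hyperplane, and exactly `2` points on ten of them, given by `20` functionals `f`.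

Normalize one of these tangent hyperplanes to `v 3 = 0` and one of its two points, `p` and `-p`, to
`p = e₂`. Being symmetric and free of lines through `p`, the cap `S` is determined by the function
`g` over the plane whose graph is `S ∩ {v 3 = 1}`, and the cap condition becomes: no line sum of
`g` vanishes. These `g` are the quadratic polynomials with anisotropic quadratic part, `6 * 27` in
number. The linear group is transitive on the `80 * 26` flags `(p, f)`, and each `S` has `20 * 2`
tangent flags, so there are `80 * 26 * 162 / 40 = 8424` such caps.
-/

section

open Finset Module

variable {n : ℕ}

/-! ### Hyperplane sections of caps -/

section FiniteField

variable {K : Type*} [Field K] [Fintype K] [DecidableEq K]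

lemma card_filter_dotProduct_eq {w : Fin (n + 1) → K} (hw : w ≠ 0) (c : K) :
    #{f : Fin (n + 1) → K | f ⬝ᵥ w = c} = Fintype.card K ^ n := by
  obtain ⟨i, hi⟩ := Function.ne_iff.mp hw
  let φ : (Fin (n + 1) → K) →+ K := AddMonoidHom.mk' (· ⬝ᵥ w) fun f g => add_dotProduct f g w
  have hφ : Function.Surjective φ := fun a =>
    ⟨Pi.single i (a / w i), by simp [φ, div_mul_cancel₀ a hi]⟩
  have hfiber (a : K) : #{f | φ f = a} = #{f | φ f = c} :=
    AddMonoidHom.card_fiber_eq_of_mem_range φ (hφ a) (hφ c)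
  have hsum := card_eq_sum_card_fiberwise (f := φ) (s := univ) (t := univ) fun _ _ => mem_univ _
  simp only [hfiber, sum_const, smul_eq_mul, card_univ, Fintype.card_fun, Fintype.card_fin,
    pow_succ'] at hsum
  exact (Nat.eq_of_mul_eq_mul_left Fintype.card_pos hsum).symm

lemma sum_card_filter_dotProduct_eq_zero {α : Type*} (s : Finset α) (v : α → Fin (n + 1) → K) :
    ∑ f : Fin (n + 1) → K, #{i ∈ s | f ⬝ᵥ v i = 0} =
        Fintype.card K ^ n * (#s + (Fintype.card K - 1) * #{i ∈ s | v i = 0}) := by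
  have hcount (i : α) : #{f : Fin (n + 1) → K | f ⬝ᵥ v i = 0}
      = Fintype.card K ^ n * (1 + (Fintype.card K - 1) * if v i = 0 then 1 else 0) := by
    split_ifs with hi
    · simp [hi, pow_succ, add_tsub_cancel_of_le (Nat.one_le_of_lt (Fintype.card_pos (α := K)))]
    · simp [card_filter_dotProduct_eq hi]
  have hswap := sum_card_bipartiteAbove_eq_sum_card_bipartiteBelow (s := univ) (t := s)
    fun (f : Fin (n + 1) → K) i => f ⬝ᵥ v i = 0
  simp only [bipartiteAbove, bipartiteBelow] at hswap
  rw [hswap, sum_congr rfl fun i _ => hcount i, ← mul_sum, sum_add_distrib, ← mul_sum, card_filter,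
    card_eq_sum_ones]

end FiniteField

lemma sum_zmod_three {M : Type*} [AddCommMonoid M] (F : ZMod 3 → M) : ∑ a, F a = F 0 + F 1 + F 2 :=
  Fin.sum_univ_three F

lemma two_mul_dvd_sum_of_neg_eq {V : Type*} [AddCommGroup V] [Fintype V]
    (hV : ∀ v : V, -v = v → v = 0) {m : ℤ} {D : V → ℤ} (hzero : D 0 = 0)
    (hneg : ∀ v, D (-v) = D v) (hdvd : ∀ v, m ∣ D v) :
    2 * m ∣ ∑ v, D v := by
  have heven : (2 : ℤ) ∣ ∑ v, D v / m := by
    rw [← Nat.cast_two, ← ZMod.intCast_zmod_eq_zero_iff_dvd, Int.cast_sum]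
    refine sum_involution (fun v _ => -v) (fun v _ => ?_) (fun v _ hv hfix => hv ?_)
      (fun v _ => mem_univ _) fun v _ => neg_neg v
    · rw [hneg, CharTwo.add_self_eq_zero]
    · simp [hV v hfix, hzero]
  calc 2 * m = m * 2 := mul_comm _ _
    _ ∣ m * ∑ v, D v / m := mul_dvd_mul_left m heven
    _ = ∑ v, D v := by simp only [mul_sum, Int.mul_ediv_cancel' (hdvd _)]

/-- The number of points of `S` on the affine hyperplane `{x | f ⬝ᵥ x = c}` (for `f = 0` this is
the whole space or empty). -/
def sectionCard (S : Finset (Fin n → ZMod 3)) (f : Fin n → ZMod 3) (c : ZMod 3) : ℕ :=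
  #{x ∈ S | f ⬝ᵥ x = c}

/-- The number of pairs of points of `S` on a common hyperplane parallel to `{x | f ⬝ᵥ x = 0}`. -/
def pairCard (S : Finset (Fin n → ZMod 3)) (f : Fin n → ZMod 3) : ℕ :=
  #{p ∈ S ×ˢ S | f ⬝ᵥ (p.1 - p.2) = 0}

/-- The number of triples of points of `S` whose sum lies on `{x | f ⬝ᵥ x = 0}`. -/
def tripleCard (S : Finset (Fin n → ZMod 3)) (f : Fin n → ZMod 3) : ℕ :=
  #{p ∈ S ×ˢ S ×ˢ S | f ⬝ᵥ (p.1 + p.2.1 + p.2.2) = 0}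

lemma card_compl_zero : #({0}ᶜ : Finset (Fin n → ZMod 3)) = 3 ^ n - 1 := by
  simp [card_compl]

lemma sectionCard_zero_left (S : Finset (Fin n → ZMod 3)) : sectionCard S 0 0 = #S := by
  simp [sectionCard]

lemma pairCard_zero_right (S : Finset (Fin n → ZMod 3)) : pairCard S 0 = #S ^ 2 := by
  simp [pairCard, sq]

lemma tripleCard_zero_right (S : Finset (Fin n → ZMod 3)) : tripleCard S 0 = #S ^ 3 := by
  simp [tripleCard, pow_three]

lemma sectionCard_neg (S : Finset (Fin n → ZMod 3)) (f : Fin n → ZMod 3) (c : ZMod 3) :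
    sectionCard S (-f) c = sectionCard S f (-c) := by
  simp only [sectionCard, neg_dotProduct, neg_eq_iff_eq_neg]

lemma pairCard_neg (S : Finset (Fin n → ZMod 3)) (f : Fin n → ZMod 3) :
    pairCard S (-f) = pairCard S f := by
  simp only [pairCard, neg_dotProduct, neg_eq_zero]

lemma sum_comp_dotProduct {M : Type*} [AddCommMonoid M] (S : Finset (Fin n → ZMod 3))
    (f : Fin n → ZMod 3) (F : ZMod 3 → M) :
    ∑ x ∈ S, F (f ⬝ᵥ x) = ∑ c, sectionCard S f c • F c := by
  rw [← sum_fiberwise S (f ⬝ᵥ ·)]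
  refine sum_congr rfl fun c _ => ?_
  rw [sectionCard, ← sum_const]
  exact sum_congr rfl fun x hx => congrArg F (mem_filter.mp hx).2

lemma sectionCard_add_add (S : Finset (Fin n → ZMod 3)) (f : Fin n → ZMod 3) :
    sectionCard S f 0 + sectionCard S f 1 + sectionCard S f 2 = #S := by
  rw [← sum_zmod_three (sectionCard S f), card_eq_sum_ones, sum_comp_dotProduct S f fun _ => 1]
  simp only [smul_eq_mul, mul_one]

lemma pairCard_eq (S : Finset (Fin n → ZMod 3)) (f : Fin n → ZMod 3) :
    pairCard S f = sectionCard S f 0 ^ 2 + sectionCard S f 1 ^ 2 + sectionCard S f 2 ^ 2 := by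
  have hfiber (x : Fin n → ZMod 3) :
      #{y ∈ S | f ⬝ᵥ (x - y) = 0} = sectionCard S f (f ⬝ᵥ x) := by
    simp only [sectionCard, dotProduct_sub, sub_eq_zero, eq_comm]
  calc pairCard S f = ∑ x ∈ S, #{y ∈ S | f ⬝ᵥ (x - y) = 0} := by
        simp only [pairCard, card_filter, sum_product]
    _ = ∑ c, sectionCard S f c * sectionCard S f c := by
        simp only [hfiber, sum_comp_dotProduct S f (sectionCard S f), smul_eq_mul]
    _ = _ := by simp only [sum_zmod_three, sq]

lemma tripleCard_eq (S : Finset (Fin n → ZMod 3)) (f : Fin n → ZMod 3) :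
    tripleCard S f = sectionCard S f 0 ^ 3 + sectionCard S f 1 ^ 3 + sectionCard S f 2 ^ 3
      + 6 * (sectionCard S f 0 * sectionCard S f 1 * sectionCard S f 2) := by
  have hfiber (x y : Fin n → ZMod 3) :
      #{z ∈ S | f ⬝ᵥ (x + y + z) = 0} = sectionCard S f (-(f ⬝ᵥ x + f ⬝ᵥ y)) := by
    simp only [sectionCard, dotProduct_add, eq_neg_iff_add_eq_zero, add_comm]
  calc tripleCard S f = ∑ x ∈ S, ∑ y ∈ S, #{z ∈ S | f ⬝ᵥ (x + y + z) = 0} := by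
        simp only [tripleCard, card_filter, sum_product]
    _ = ∑ x ∈ S, ∑ b, sectionCard S f b * sectionCard S f (-(f ⬝ᵥ x + b)) := by
        refine sum_congr rfl fun x _ => ?_
        simp only [hfiber]
        exact sum_comp_dotProduct S f fun b => sectionCard S f (-(f ⬝ᵥ x + b))
    _ = ∑ a, sectionCard S f a * ∑ b, sectionCard S f b * sectionCard S f (-(a + b)) :=
        sum_comp_dotProduct S f fun a => ∑ b, sectionCard S f b * sectionCard S f (-(a + b))
    _ = _ := by
        simp only [sum_zmod_three]
        reduce_mod_char
        ring

lemma sum_sectionCard_dotProduct (S : Finset (Fin (n + 1) → ZMod 3)) (x : Fin (n + 1) → ZMod 3) :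
    ∑ f, sectionCard S f (f ⬝ᵥ x) = 3 ^ n * (#S + 2 * if x ∈ S then 1 else 0) := by
  have h := sum_card_filter_dotProduct_eq_zero S (· - x)
  simpa only [sectionCard, dotProduct_sub, sub_eq_zero, ZMod.card, filter_eq', apply_ite card,
    card_singleton, card_empty] using h

lemma sum_pairCard (S : Finset (Fin (n + 1) → ZMod 3)) :
    ∑ f, pairCard S f = 3 ^ n * (#S ^ 2 + 2 * #S) := by
  have hdiag : #{p ∈ S ×ˢ S | p.1 - p.2 = 0} = #S := by
    simp only [sub_eq_zero, ← diag_eq_filter, diag_card]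
  have h := sum_card_filter_dotProduct_eq_zero (S ×ˢ S) fun p => p.1 - p.2
  rwa [hdiag, ZMod.card, card_product, ← sq] at h

lemma sum_compl_zero_pairCard (S : Finset (Fin (n + 1) → ZMod 3)) :
    ∑ f ∈ {0}ᶜ, pairCard S f + #S ^ 2 = 3 ^ n * (#S ^ 2 + 2 * #S) := by
  rw [← sum_pairCard, Fintype.sum_eq_add_sum_compl 0, pairCard_zero_right, add_comm]

section LineSum

variable {V : Type*} [AddCommGroup V] [Module (ZMod 3) V]

lemma add_self_add_self_eq_zero (v : V) : v + v + v = 0 := by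
  simpa [succ_nsmul] using ZModModule.char_nsmul_eq_zero 3 v

lemma eq_of_add_add_eq_zero {x z : V} (h : x + x + z = 0) : x = z :=
  add_left_cancel ((add_self_add_self_eq_zero x).trans h.symm)

lemma eq_zero_of_neg_eq_self {v : V} (h : -v = v) : v = 0 :=
  eq_of_add_add_eq_zero (by simpa using neg_eq_iff_add_eq_zero.mp h)

end LineSum

namespace IsCap

variable {S : Finset (Fin n → ZMod 3)}

lemma subset (hS : IsCap S) {T : Finset (Fin n → ZMod 3)} (h : T ⊆ S) : IsCap T :=
  fun x hx y hy z hz => hS x (h hx) y (h hy) z (h hz)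

lemma add_add_eq_zero_iff (hS : IsCap S) {x y z : Fin n → ZMod 3} (hx : x ∈ S) (hy : y ∈ S)
    (hz : z ∈ S) : x + y + z = 0 ↔ x = y ∧ x = z := by
  constructor
  · intro h
    have hxy : x = y := by
      by_contra hxy
      refine hS x hx y hy z hz hxy ?_ ?_ h
      · rintro rfl
        exact hxy (eq_of_add_add_eq_zero (add_right_comm x y x ▸ h))
      · rintro rfl
        exact hxy (eq_of_add_add_eq_zero (by rw [← h]; abel)).symm
    subst hxy
    exact ⟨rfl, eq_of_add_add_eq_zero h⟩
  · rintro ⟨rfl, rfl⟩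
    exact add_self_add_self_eq_zero x

lemma sum_tripleCard {S : Finset (Fin (n + 1) → ZMod 3)} (hS : IsCap S) :
    ∑ f, tripleCard S f = 3 ^ n * (#S ^ 3 + 2 * #S) := by
  have hconst : #{p ∈ S ×ˢ S ×ˢ S | p.1 + p.2.1 + p.2.2 = 0} = #S := by
    symm
    refine card_bij (fun x _ => (x, x, x)) (fun x hx => ?_) (fun x _ y _ h => congrArg Prod.fst h)
      fun p hp => ?_
    · simpa [hx] using add_self_add_self_eq_zero x
    · obtain ⟨hp, hsum⟩ := mem_filter.mp hp
      simp only [mem_product] at hp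
      obtain ⟨h₁, h₂⟩ := (hS.add_add_eq_zero_iff hp.1 hp.2.1 hp.2.2).mp hsum
      exact ⟨p.1, hp.1, Prod.ext rfl (Prod.ext h₁ h₂)⟩
  have h := sum_card_filter_dotProduct_eq_zero (S ×ˢ S ×ˢ S) fun p => p.1 + p.2.1 + p.2.2
  rwa [hconst, ZMod.card, card_product, card_product, ← pow_three] at h

end IsCap

/-! ### Caps of `AG(4,3)` have at most `20` points -/

lemma eq_zero_of_removeNth_eq_zero {K : Type*} [Field K] {f : Fin (n + 1) → K} {i : Fin (n + 1)}
    (hi : f i ≠ 0) {w : Fin (n + 1) → K} (hw : f ⬝ᵥ w = 0) (hremove : i.removeNth w = 0) :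
    w = 0 := by
  have hsucc (j : Fin n) : w (i.succAbove j) = 0 := congrFun hremove j
  have hwi : w i = 0 := by simpa [dotProduct, Fin.sum_univ_succAbove _ i, hsucc, hi] using hw
  exact funext (Fin.forall_iff_succAbove i |>.mpr ⟨hwi, hsucc⟩)

lemma IsCap.sectionCard_le {S : Finset (Fin (n + 1) → ZMod 3)} (hS : IsCap S) {B : ℕ}
    (hB : ∀ T : Finset (Fin n → ZMod 3), IsCap T → #T ≤ B) {f : Fin (n + 1) → ZMod 3} (hf : f ≠ 0)
    (c : ZMod 3) : sectionCard S f c ≤ B := by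
  obtain ⟨i, hi⟩ := Function.ne_iff.mp hf
  have hinj : Set.InjOn (i.removeNth (α := fun _ => ZMod 3)) (S.filter (f ⬝ᵥ · = c)) := by
    intro x hx y hy hxy
    rw [mem_coe, mem_filter] at hx hy
    exact sub_eq_zero.mp <| eq_zero_of_removeNth_eq_zero hi
      (by rw [dotProduct_sub, hx.2, hy.2, sub_self]) (sub_eq_zero.mpr hxy)
  rw [sectionCard, ← card_image_of_injOn hinj]
  refine hB _ ?_
  simp only [IsCap, forall_mem_image, mem_filter]
  intro x hx y hy z hz hxy hxz hyz hsum
  refine hS x hx.1 y hy.1 z hz.1 (ne_of_apply_ne _ hxy) (ne_of_apply_ne _ hxz)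
    (ne_of_apply_ne _ hyz) (eq_zero_of_removeNth_eq_zero hi ?_ hsum)
  rw [dotProduct_add, dotProduct_add, hx.2, hy.2, hz.2, add_self_add_self_eq_zero]

lemma IsCap.card_lt_of_quadratic {B m : ℕ} (hB : ∀ T : Finset (Fin n → ZMod 3), IsCap T → #T ≤ B)
    (hm : (m ^ 2 + (3 ^ (n + 1) - 1) * (2 * B ^ 2 + (m - 2 * B) ^ 2) : ℤ)
      < 3 ^ n * (m ^ 2 + 2 * m)) {S : Finset (Fin (n + 1) → ZMod 3)} (hS : IsCap S) : #S < m := by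
  by_contra! hmS
  obtain ⟨T, hTS, rfl⟩ := exists_subset_card_eq hmS
  have hpair (f) (hf : f ∈ ({0}ᶜ : Finset (Fin (n + 1) → ZMod 3))) :
      (pairCard T f : ℤ) ≤ 2 * B ^ 2 + (#T - 2 * B) ^ 2 := by
    have hle (c) : (sectionCard T f c : ℤ) ≤ B :=
      mod_cast (hS.subset hTS).sectionCard_le hB (by simpa using hf) c
    rw [pairCard_eq, ← sectionCard_add_add T f]
    push_cast
    nlinarith [mul_nonneg (sub_nonneg.mpr (hle 0)) (sub_nonneg.mpr (hle 1)),
      mul_nonneg (sub_nonneg.mpr (hle 0)) (sub_nonneg.mpr (hle 2)),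
      mul_nonneg (sub_nonneg.mpr (hle 1)) (sub_nonneg.mpr (hle 2))]
  have hsum := sum_compl_zero_pairCard T
  have hle := sum_le_card_nsmul _ _ _ hpair
  rw [nsmul_eq_mul, card_compl_zero, Nat.cast_pred (by positivity)] at hle
  push_cast at hle
  zify at hsum
  linarith

lemma IsCap.card_le_two {S : Finset (Fin 1 → ZMod 3)} (hS : IsCap S) : #S ≤ 2 := by
  by_contra! hcard
  have huniv : S = univ := by
    rw [← card_eq_iff_eq_univ]
    exact le_antisymm (card_le_univ S) hcard
  subst huniv
  exact hS 0 (mem_univ _) 1 (mem_univ _) 2 (mem_univ _) (by decide) (by decide) (by decide)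
    (by decide)

lemma IsCap.card_le_four {S : Finset (Fin 2 → ZMod 3)} (hS : IsCap S) : #S ≤ 4 :=
  Nat.lt_succ_iff.mp (hS.card_lt_of_quadratic (fun _ => card_le_two) (by norm_num))

lemma IsCap.card_le_nine {S : Finset (Fin 3 → ZMod 3)} (hS : IsCap S) : #S ≤ 9 :=
  Nat.lt_succ_iff.mp (hS.card_lt_of_quadratic (fun _ => card_le_four) (by norm_num))

lemma IsCap.sectionCard_le_nine {S : Finset (Fin 4 → ZMod 3)} (hS : IsCap S) {f : Fin 4 → ZMod 3}
    (hf : f ≠ 0) (c : ZMod 3) : sectionCard S f c ≤ 9 :=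
  hS.sectionCard_le (fun _ => card_le_nine) hf c

lemma IsCap.sum_tripleCard_add_pairCard {S : Finset (Fin (n + 1) → ZMod 3)} (hS : IsCap S) :
    ∑ f ∈ {0}ᶜ, (tripleCard S f + 6 * pairCard S f) + (#S ^ 3 + 6 * #S ^ 2) =
      3 ^ n * (#S ^ 3 + 6 * #S ^ 2 + 14 * #S) := by
  have htriple := hS.sum_tripleCard
  have hpair := sum_compl_zero_pairCard S
  rw [Fintype.sum_eq_add_sum_compl 0, tripleCard_zero_right] at htriple
  rw [sum_add_distrib, ← mul_sum]
  linarith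

section CubicExcess

variable {a b c : ℤ}

-- With `u = 9 - a`, `v = 9 - b`, `w = 9 - c` the excess over `3969` is
-- `6 * (u * v + v * w + w * u) - 9 * (u * v * w)`, which becomes homogeneous through
-- `u + v + w = 6`.
lemma cubic_eq_of_add_eq_twenty_one (hsum : a + b + c = 21) :
    a ^ 3 + b ^ 3 + c ^ 3 + 6 * (a * b * c) + 6 * (a ^ 2 + b ^ 2 + c ^ 2) = 3969 +
      ((9 - a) * (b - c) ^ 2 + (9 - b) * (a - c) ^ 2 + (9 - c) * (a - b) ^ 2) := by
  obtain rfl : c = 21 - a - b := by linarith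
  ring

lemma le_cubic_of_add_eq_twenty_one (ha : a ≤ 9) (hb : b ≤ 9) (hc : c ≤ 9)
    (hsum : a + b + c = 21) :
    3969 ≤ a ^ 3 + b ^ 3 + c ^ 3 + 6 * (a * b * c) + 6 * (a ^ 2 + b ^ 2 + c ^ 2) := by
  rw [cubic_eq_of_add_eq_twenty_one hsum, le_add_iff_nonneg_right]
  have := sub_nonneg.mpr ha
  have := sub_nonneg.mpr hb
  have := sub_nonneg.mpr hc
  positivity

lemma sq_add_sq_add_sq_of_cubic_eq (ha : a ≤ 9) (hb : b ≤ 9) (hc : c ≤ 9)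
    (hsum : a + b + c = 21)
    (heq : a ^ 3 + b ^ 3 + c ^ 3 + 6 * (a * b * c) + 6 * (a ^ 2 + b ^ 2 + c ^ 2) = 3969) :
    a ^ 2 + b ^ 2 + c ^ 2 = 147 ∨ a ^ 2 + b ^ 2 + c ^ 2 = 171 := by
  rw [cubic_eq_of_add_eq_twenty_one hsum, add_eq_left] at heq
  have hnonneg {x : ℤ} (hx : x ≤ 9) (y : ℤ) : 0 ≤ (9 - x) * y ^ 2 :=
    mul_nonneg (sub_nonneg.mpr hx) (sq_nonneg y)
  rw [add_eq_zero_iff_of_nonneg (add_nonneg (hnonneg ha _) (hnonneg hb _)) (hnonneg hc _),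
    add_eq_zero_iff_of_nonneg (hnonneg ha _) (hnonneg hb _)] at heq
  simp only [mul_eq_zero, pow_eq_zero_iff two_ne_zero, sub_eq_zero] at heq
  have hcases : a = 7 ∧ b = 7 ∧ c = 7 ∨ a = 9 ∧ b = 9 ∧ c = 3 ∨ a = 9 ∧ b = 3 ∧ c = 9 ∨
      a = 3 ∧ b = 9 ∧ c = 9 := by omega
  rcases hcases with ⟨rfl, rfl, rfl⟩ | ⟨rfl, rfl, rfl⟩ | ⟨rfl, rfl, rfl⟩ | ⟨rfl, rfl, rfl⟩ <;> simp

end CubicExcess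

lemma IsCap.pairCard_of_card_eq_twenty_one {S : Finset (Fin 4 → ZMod 3)} (hS : IsCap S)
    (hcard : #S = 21) {f : Fin 4 → ZMod 3} (hf : f ≠ 0) :
    pairCard S f = 147 ∨ pairCard S f = 171 := by
  have hsection (g) (c) (hg : g ≠ 0) : (sectionCard S g c : ℤ) ≤ 9 :=
    mod_cast hS.sectionCard_le_nine hg c
  have hadd (g) : (sectionCard S g 0 + sectionCard S g 1 + sectionCard S g 2 : ℤ) = 21 :=
    mod_cast hcard ▸ sectionCard_add_add S g
  have hbound (g) (hg : g ∈ ({0}ᶜ : Finset (Fin 4 → ZMod 3))) :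
      3969 ≤ tripleCard S g + 6 * pairCard S g := by
    rw [mem_compl, mem_singleton] at hg
    rw [tripleCard_eq, pairCard_eq]
    exact_mod_cast le_cubic_of_add_eq_twenty_one (hsection g 0 hg) (hsection g 1 hg)
      (hsection g 2 hg) (hadd g)
  have htotal := hS.sum_tripleCard_add_pairCard
  rw [hcard] at htotal
  have heq := (sum_eq_sum_iff_of_le hbound).mp
    (by rw [sum_const, card_compl_zero, smul_eq_mul]; lia) f (by simpa using hf)
  rw [tripleCard_eq, pairCard_eq] at heq
  rw [pairCard_eq]
  exact_mod_cast sq_add_sq_add_sq_of_cubic_eq (hsection f 0 hf) (hsection f 1 hf)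
      (hsection f 2 hf) (hadd f) (mod_cast heq.symm)

lemma IsCap.card_ne_twenty_one {S : Finset (Fin 4 → ZMod 3)} (hS : IsCap S) : #S ≠ 21 := by
  intro hcard
  let D (f : Fin 4 → ZMod 3) : ℤ := if f = 0 then 0 else pairCard S f - 147
  have hdvd (f) : 24 ∣ D f := by
    by_cases hf : f = 0
    · simp [D, hf]
    · rcases hS.pairCard_of_card_eq_twenty_one hcard hf with h | h <;> simp [D, hf, h]
  have hcongr : ∑ f ∈ {0}ᶜ, D f = ∑ f ∈ {0}ᶜ, ((pairCard S f : ℤ) - 147) :=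
    sum_congr rfl fun f hf => if_neg (by simpa using hf)
  have hpair : ∑ f ∈ {0}ᶜ, pairCard S f = 12600 := by
    have h := sum_compl_zero_pairCard S
    rw [hcard] at h
    lia
  have hsum : ∑ f, D f = 840 := by
    rw [Fintype.sum_eq_add_sum_compl 0, hcongr, sum_sub_distrib, ← Nat.cast_sum, hpair, sum_const,
      card_compl_zero]
    simp [D]
  have := two_mul_dvd_sum_of_neg_eq (fun v => eq_zero_of_neg_eq_self) (by simp [D])
    (by simp [D, pairCard_neg]) hdvd
  omega

lemma IsCap.card_le_twenty {S : Finset (Fin 4 → ZMod 3)} (hS : IsCap S) : #S ≤ 20 := by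
  by_contra! hlt
  obtain ⟨T, hTS, hcard⟩ := exists_subset_card_eq (Nat.succ_le_of_lt hlt)
  exact (hS.subset hTS).card_ne_twenty_one hcard

/-! ### Hyperplane sections of zero-anchored caps -/

/-- The caps counted by the main theorem: the `20`-point caps of `AG(4,3)` with zero anchor.
Twenty is the largest size of a cap, see `IsCap.card_le_twenty`. -/
structure ZeroAnchoredCap (S : Finset (Fin 4 → ZMod 3)) : Prop where
  isCap : IsCap S
  card_eq : #S = 20
  sum_eq_zero : ∑ x ∈ S, x = 0

lemma sectionCard_modEq_of_sum_eq_zero {S : Finset (Fin n → ZMod 3)}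
    (hS : ∑ x ∈ S, x = 0) (f : Fin n → ZMod 3) :
    sectionCard S f 1 ≡ sectionCard S f 2 [MOD 3] := by
  have hsum : ∑ x ∈ S, f ⬝ᵥ x = 0 := by rw [← dotProduct_sum, hS, dotProduct_zero]
  rw [sum_comp_dotProduct S f fun c => c, sum_zmod_three] at hsum
  rw [← ZMod.natCast_eq_natCast_iff]
  have h := add_self_add_self_eq_zero (sectionCard S f 2 : ZMod 3)
  simp only [nsmul_eq_mul] at hsum
  linear_combination hsum - h

section CubicExcess

variable {a b c : ℤ}

-- With `u = 9 - a`, `v = 9 - b`, `w = 9 - c` the excess is `9 * (u - 1) * (v + w - v * w)`.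
lemma cubic_eq_of_add_eq_twenty (hsum : a + b + c = 20) :
    a ^ 3 + b ^ 3 + c ^ 3 + 6 * (a * b * c) + 6 * (a ^ 2 + b ^ 2 + c ^ 2) =
      9 * a + 3416 + 9 * ((8 - a) * (1 - (8 - b) * (8 - c))) := by
  obtain rfl : a = 20 - b - c := by linarith
  ring

lemma excess_pos_or_eq_zero_of_add_eq_twenty (ha : a ≤ 9) (hb : b ≤ 9) (hc : c ≤ 9)
    (hsum : a + b + c = 20) (hmod : b ≡ c [ZMOD 3]) :
    0 < (8 - a) * (1 - (8 - b) * (8 - c)) ∨ (8 - a) * (1 - (8 - b) * (8 - c)) = 0 ∧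
      (b = c ∧ (a = 2 ∨ a = 6 ∨ a = 8) ∨ b = c + 6 ∨ c = b + 6) := by
  obtain rfl : a = 20 - b - c := by linarith
  have hb_lower : 2 ≤ b := by linarith
  have hc_lower : 2 ≤ c := by linarith
  rw [Int.ModEq] at hmod
  interval_cases b <;> interval_cases c <;> simp at *

end CubicExcess

lemma sum_compl_zero_sectionCard_zero (S : Finset (Fin (n + 1) → ZMod 3)) :
    ∑ f ∈ {0}ᶜ, sectionCard S f 0 + #S = 3 ^ n * (#S + 2 * if 0 ∈ S then 1 else 0) := by
  rw [← sum_sectionCard_dotProduct, Fintype.sum_eq_add_sum_compl 0, dotProduct_zero,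
    sectionCard_zero_left, add_comm]
  simp only [dotProduct_zero]

namespace ZeroAnchoredCap

variable {S : Finset (Fin 4 → ZMod 3)}

lemma sectionCard_add_add (hS : ZeroAnchoredCap S) (f : Fin 4 → ZMod 3) :
    sectionCard S f 0 + sectionCard S f 1 + sectionCard S f 2 = 20 :=
  hS.card_eq ▸ _root_.sectionCard_add_add S f

lemma lt_or_eq_tripleCard_add_pairCard (hS : ZeroAnchoredCap S) {f : Fin 4 → ZMod 3} (hf : f ≠ 0) :
    9 * sectionCard S f 0 + 3416 < tripleCard S f + 6 * pairCard S f ∨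
    9 * sectionCard S f 0 + 3416 = tripleCard S f + 6 * pairCard S f ∧
    (sectionCard S f 1 = sectionCard S f 2 ∧
      (sectionCard S f 0 = 2 ∨ sectionCard S f 0 = 6 ∨ sectionCard S f 0 = 8) ∨
    sectionCard S f 1 = sectionCard S f 2 + 6 ∨ sectionCard S f 2 = sectionCard S f 1 + 6) := by
  have hle (c) : (sectionCard S f c : ℤ) ≤ 9 := mod_cast hS.isCap.sectionCard_le_nine hf c
  have hadd : (sectionCard S f 0 + sectionCard S f 1 + sectionCard S f 2 : ℤ) = 20 :=
    mod_cast hS.sectionCard_add_add f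
  have hmod : (sectionCard S f 1 : ℤ) ≡ sectionCard S f 2 [ZMOD 3] :=
    Int.natCast_modEq_iff.mpr (sectionCard_modEq_of_sum_eq_zero hS.sum_eq_zero f)
  have hexcess := excess_pos_or_eq_zero_of_add_eq_twenty (hle 0) (hle 1) (hle 2) hadd hmod
  have hcubic := cubic_eq_of_add_eq_twenty hadd
  zify [tripleCard_eq, pairCard_eq]
  lia

lemma sectionCard_trichotomy (hS : ZeroAnchoredCap S) {f : Fin 4 → ZMod 3} (hf : f ≠ 0) :
    sectionCard S f 1 = sectionCard S f 2 ∧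
      (sectionCard S f 0 = 2 ∨ sectionCard S f 0 = 6 ∨ sectionCard S f 0 = 8) ∨
    sectionCard S f 1 = sectionCard S f 2 + 6 ∨ sectionCard S f 2 = sectionCard S f 1 + 6 := by
  have hle (g) (hg : g ∈ ({0}ᶜ : Finset (Fin 4 → ZMod 3))) :
      9 * sectionCard S g 0 + 3416 ≤ tripleCard S g + 6 * pairCard S g := by
    rcases hS.lt_or_eq_tripleCard_add_pairCard (by simpa using hg) with h | ⟨h, -⟩
    exacts [h.le, h.le]
  have htotal := hS.isCap.sum_tripleCard_add_pairCard
  have hzero := sum_compl_zero_sectionCard_zero S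
  have hlower : ∑ f ∈ {0}ᶜ, (9 * sectionCard S f 0 + 3416) =
      9 * ∑ f ∈ {0}ᶜ, sectionCard S f 0 + 80 * 3416 := by
    rw [sum_add_distrib, ← mul_sum, sum_const, card_compl_zero, smul_eq_mul]
    norm_num
  have hsum := sum_le_sum hle
  rw [hS.card_eq] at htotal hzero
  have heq := (sum_eq_sum_iff_of_le hle).mp (by lia) f (by simpa using hf)
  exact ((hS.lt_or_eq_tripleCard_add_pairCard hf).resolve_left heq.not_lt).2

lemma neg_mem (hS : ZeroAnchoredCap S) {x : Fin 4 → ZMod 3} (hx : x ∈ S) : -x ∈ S := by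
  by_contra hneg
  let D (f : Fin 4 → ZMod 3) : ℤ := sectionCard S f (f ⬝ᵥ x) - sectionCard S f (f ⬝ᵥ -x)
  have hdvd (f) : 6 ∣ D f := by
    by_cases hf : f = 0
    · simp [D, hf]
    have h := hS.sectionCard_trichotomy hf
    have h' : (6 : ℤ) ∣ sectionCard S f 1 - sectionCard S f 2 := by lia
    simp only [D, dotProduct_neg]
    generalize f ⬝ᵥ x = c
    fin_cases c
    · exact ⟨0, sub_self _⟩
    · exact h'
    · exact dvd_sub_comm.mp h'
  have hsum : ∑ f, D f = 54 := by
    have hpos := sum_sectionCard_dotProduct S x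
    have hminus := sum_sectionCard_dotProduct S (-x)
    rw [hS.card_eq, if_pos hx] at hpos
    rw [hS.card_eq, if_neg hneg] at hminus
    rw [sum_sub_distrib, ← Nat.cast_sum, ← Nat.cast_sum, hpos, hminus]
    norm_num
  have := two_mul_dvd_sum_of_neg_eq (fun v => eq_zero_of_neg_eq_self) (by simp [D])
    (by simp [D, sectionCard_neg]) hdvd
  omega

lemma sectionCard_one_eq_two (hS : ZeroAnchoredCap S) (f : Fin 4 → ZMod 3) :
    sectionCard S f 1 = sectionCard S f 2 := by
  have hmaps (c x) (hx : x ∈ ({x ∈ S | f ⬝ᵥ x = c} : Finset _)) : -x ∈ {x ∈ S | f ⬝ᵥ x = -c} := by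
    rw [mem_filter] at hx ⊢
    exact ⟨hS.neg_mem hx.1, by rw [dotProduct_neg, hx.2]⟩
  exact card_nbij' Neg.neg Neg.neg (hmaps 1) (hmaps 2) (fun x _ => neg_neg x) fun x _ => neg_neg x

lemma sectionCard_zero_cases (hS : ZeroAnchoredCap S) {f : Fin 4 → ZMod 3} (hf : f ≠ 0) :
    sectionCard S f 0 = 2 ∨ sectionCard S f 0 = 6 ∨ sectionCard S f 0 = 8 := by
  have h := hS.sectionCard_one_eq_two f
  have := hS.sectionCard_trichotomy hf
  lia

lemma pairCard_eq (hS : ZeroAnchoredCap S) {f : Fin 4 → ZMod 3} (hf : f ≠ 0) :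
    pairCard S f = 36 * (if sectionCard S f 0 = 2 then 1 else 0) + 128 + sectionCard S f 0 := by
  have hhalf := hS.sectionCard_one_eq_two f
  have hadd := hS.sectionCard_add_add f
  rw [_root_.pairCard_eq]
  obtain ⟨h₀, h₂⟩ | ⟨h₀, h₂⟩ | ⟨h₀, h₂⟩ :
      sectionCard S f 0 = 2 ∧ sectionCard S f 2 = 9 ∨
      sectionCard S f 0 = 6 ∧ sectionCard S f 2 = 7 ∨
      sectionCard S f 0 = 8 ∧ sectionCard S f 2 = 6 := by
    have := hS.sectionCard_zero_cases hf
    lia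
  all_goals simp [hhalf, h₀, h₂]

lemma zero_notMem (hS : ZeroAnchoredCap S) : 0 ∉ S := by
  intro hzero
  obtain ⟨x, hx, hx0⟩ := exists_mem_ne (s := S) (by rw [hS.card_eq]; norm_num) 0
  have hne : x ≠ -x := fun h => hx0 (eq_zero_of_neg_eq_self h.symm)
  exact hS.isCap 0 hzero x hx (-x) (hS.neg_mem hx) hx0.symm (neg_ne_zero.mpr hx0).symm hne
    (by rw [zero_add, add_neg_cancel])

lemma card_filter_sectionCard_eq_two (hS : ZeroAnchoredCap S) :
    #{f | sectionCard S f 0 = 2} = 20 := by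
  have hzero := sum_compl_zero_sectionCard_zero S
  have hpair := sum_compl_zero_pairCard S
  have hcompl : #{f | sectionCard S f 0 = 2} =
      ∑ f ∈ {0}ᶜ, if sectionCard S f 0 = 2 then 1 else 0 := by
    rw [card_filter, Fintype.sum_eq_add_sum_compl 0, sectionCard_zero_left, hS.card_eq]
    simp
  rw [sum_congr rfl fun f hf => hS.pairCard_eq (by simpa using hf), sum_add_distrib,
    sum_add_distrib, ← mul_sum, ← hcompl, sum_const, card_compl_zero, smul_eq_mul] at hpair
  rw [hS.card_eq, if_neg hS.zero_notMem] at *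
  lia

end ZeroAnchoredCap

/-! ### Functions on the plane without zero line sums -/

/-- No affine line carries three values of `g` with sum zero, so that the points of the graph of
`g` over a line are never collinear. -/
def LineSumNeZero {V : Type*} [AddCommGroup V] (g : V → ZMod 3) : Prop :=
  ∀ x y z, x + y + z = 0 → x ≠ y → g x + g y + g z ≠ 0

instance {V : Type*} [AddCommGroup V] [Fintype V] [DecidableEq V] :
    DecidablePred (LineSumNeZero (V := V)) :=
  fun g => inferInstanceAs (Decidable (∀ x y z, x + y + z = 0 → x ≠ y → g x + g y + g z ≠ 0))

lemma lineSumNeZero_iff {V : Type*} [AddCommGroup V] [Module (ZMod 3) V] {g : V → ZMod 3} :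
    LineSumNeZero g ↔ ∀ x d, d ≠ 0 → g x + g (x + d) + g (x - d) ≠ 0 := by
  constructor
  · intro hg x d hd
    refine hg x (x + d) (x - d) ?_ (by simpa using hd)
    rw [← add_self_add_self_eq_zero x]
    abel
  · intro hg x y z hsum hxy
    have hz : x - (y - x) = z := by
      have hx := add_self_add_self_eq_zero x
      rw [← sub_eq_zero, ← sub_eq_zero.mpr (hx.trans hsum.symm)]
      abel
    simpa [hz] using hg x (y - x) (sub_ne_zero.mpr hxy.symm)

lemma exists_quadratic (f : ZMod 3 → ZMod 3) :
    ∃ a b c : ZMod 3, ∀ x, f x = a * x ^ 2 + b * x + c := by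
  decide +kernel +revert

lemma exists_biquadratic (g : ZMod 3 × ZMod 3 → ZMod 3) :
    ∃ t r s a b c p q k : ZMod 3, ∀ x y, g (x, y) = t * x ^ 2 * y ^ 2 + r * x ^ 2 * y +
      s * x * y ^ 2 + a * x ^ 2 + b * x * y + c * y ^ 2 + p * x + q * y + k := by
  choose A B C hABC using fun x => exists_quadratic fun y => g (x, y)
  obtain ⟨t, s, c, hA⟩ := exists_quadratic A
  obtain ⟨r, b, q, hB⟩ := exists_quadratic B
  obtain ⟨a, p, k, hC⟩ := exists_quadratic C
  refine ⟨t, r, s, a, b, c, p, q, k, fun x y => ?_⟩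
  rw [hABC, hA, hB, hC]
  ring

-- The discriminant of a quadratic polynomial over `ZMod 3` without zeros is `-t ^ 2`: a nonsquare,
-- or zero together with `t`.
lemma mul_eq_sq_add_sq_of_forall_ne_zero (α β t : ZMod 3) :
    (∀ w, α + β * w + t * w ^ 2 ≠ 0) → α * t = β ^ 2 + t ^ 2 := by
  decide +revert

lemma LineSumNeZero.coeffs_eq_zero {g : ZMod 3 × ZMod 3 → ZMod 3} (hg : LineSumNeZero g)
    {t r s a b c p q k : ZMod 3} (hpoly : ∀ x y, g (x, y) = t * x ^ 2 * y ^ 2 + r * x ^ 2 * y +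
      s * x * y ^ 2 + a * x ^ 2 + b * x * y + c * y ^ 2 + p * x + q * y + k) :
    t = 0 ∧ r = 0 ∧ s = 0 := by
  rw [lineSumNeZero_iff] at hg
  have hvertical := mul_eq_sq_add_sq_of_forall_ne_zero c s t fun w hw =>
    hg (w, 0) (0, 1) (by simp) (by simp only [Prod.mk_add_mk, Prod.mk_sub_mk, hpoly]; grind)
  have hhorizontal := mul_eq_sq_add_sq_of_forall_ne_zero a r t fun w hw =>
    hg (0, w) (1, 0) (by simp) (by simp only [Prod.mk_add_mk, Prod.mk_sub_mk, hpoly]; grind)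
  have hdiagonal := mul_eq_sq_add_sq_of_forall_ne_zero (a + b + c + t) (s - r) t fun w hw =>
    hg (w, 0) (1, 1) (by simp) (by simp only [Prod.mk_add_mk, Prod.mk_sub_mk, hpoly]; grind)
  have hantidiagonal := mul_eq_sq_add_sq_of_forall_ne_zero (a - b + c + t) (r + s) t fun w hw =>
    hg (w, 0) (1, -1) (by simp) (by simp only [Prod.mk_add_mk, Prod.mk_sub_mk, hpoly]; grind)
  have ht : t = 0 := by
    rw [← pow_eq_zero_iff two_ne_zero]
    grind
  subst ht
  refine ⟨rfl, ?_, ?_⟩ <;> rw [← pow_eq_zero_iff two_ne_zero]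
  exacts [by linear_combination -hhorizontal, by linear_combination -hvertical]

/-- The binary quadratic form over `ZMod 3` with coefficients `(a, b, c)`. -/
def binaryForm (q : ZMod 3 × ZMod 3 × ZMod 3) (v : ZMod 3 × ZMod 3) : ZMod 3 :=
  q.1 * v.1 ^ 2 + q.2.1 * v.1 * v.2 + q.2.2 * v.2 ^ 2

/-- The coefficients of the anisotropic binary quadratic forms over `ZMod 3`. -/
def anisotropicForms : Finset (ZMod 3 × ZMod 3 × ZMod 3) := {q | ∀ v ≠ 0, binaryForm q v ≠ 0}

/-- The quadratic polynomial function with quadratic part `binaryForm q` and affine part with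
coefficients `l`. -/
def quadraticFun (q l : ZMod 3 × ZMod 3 × ZMod 3) (v : ZMod 3 × ZMod 3) : ZMod 3 :=
  binaryForm q v + l.1 * v.1 + l.2.1 * v.2 + l.2.2

lemma card_anisotropicForms : #anisotropicForms = 6 := by
  decide +kernel

lemma quadraticFun_line_sum (q l : ZMod 3 × ZMod 3 × ZMod 3) (v d : ZMod 3 × ZMod 3) :
    quadraticFun q l v + quadraticFun q l (v + d) + quadraticFun q l (v - d) =
      -binaryForm q d := by
  simp only [quadraticFun, binaryForm, Prod.fst_add, Prod.snd_add, Prod.fst_sub, Prod.snd_sub]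
  grind

lemma quadraticFun_injective : Function.Injective2 quadraticFun := by
  rintro ⟨a, b, c⟩ ⟨a', b', c'⟩ ⟨p, q, k⟩ ⟨p', q', k'⟩ h
  have hval (x y) : quadraticFun (a, b, c) (p, q, k) (x, y) =
    quadraticFun (a', b', c') (p', q', k') (x, y) := congrFun h (x, y)
  simp only [quadraticFun, binaryForm] at hval
  have h₁ := hval 0 0
  have h₂ := hval 1 0
  have h₃ := hval (-1) 0
  have h₄ := hval 0 1
  have h₅ := hval 0 (-1)
  have h₆ := hval 1 1
  simp only [Prod.mk.injEq]
  refine ⟨⟨?_, ?_, ?_⟩, ?_, ?_, ?_⟩ <;> grind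

lemma lineSumNeZero_iff_exists_quadraticFun {g : ZMod 3 × ZMod 3 → ZMod 3} :
    LineSumNeZero g ↔ ∃ q ∈ anisotropicForms, ∃ l, quadraticFun q l = g := by
  constructor
  · intro hg
    obtain ⟨t, r, s, a, b, c, p, q, k, hpoly⟩ := exists_biquadratic g
    obtain ⟨rfl, rfl, rfl⟩ := hg.coeffs_eq_zero hpoly
    have heq : quadraticFun (a, b, c) (p, q, k) = g := by
      ext ⟨x, y⟩
      rw [hpoly, quadraticFun, binaryForm]
      ring
    refine ⟨(a, b, c), ?_, (p, q, k), heq⟩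
    rw [anisotropicForms, mem_filter_univ]
    intro d hd hzero
    subst heq
    exact lineSumNeZero_iff.mp hg 0 d hd (by rw [quadraticFun_line_sum, hzero, neg_zero])
  · rintro ⟨q, hq, l, rfl⟩
    rw [lineSumNeZero_iff]
    intro v d hd
    rw [quadraticFun_line_sum, neg_ne_zero]
    exact (mem_filter_univ q).mp hq d hd

lemma card_lineSumNeZero : #{g : ZMod 3 × ZMod 3 → ZMod 3 | LineSumNeZero g} = 162 := by
  have himage : ({g | LineSumNeZero g} : Finset (ZMod 3 × ZMod 3 → ZMod 3)) =
      (anisotropicForms ×ˢ univ).image (Function.uncurry quadraticFun) := by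
    ext g
    simp [lineSumNeZero_iff_exists_quadraticFun]
  rw [himage, card_image_of_injective _ quadraticFun_injective.uncurry, card_product,
    card_anisotropicForms]
  simp

/-! ### Caps with a given pole and tangent hyperplane -/

/-- The symmetric point set with poles `±e₂` and with the points `±(a, b, g (a, b), 1)`, where
`e₂ = Pi.single 2 1`; at height `v 3 = ±1` the factor `v 3` undoes the sign. -/
def suspension (g : ZMod 3 × ZMod 3 → ZMod 3) : Finset (Fin 4 → ZMod 3) :=
  {v | if v 3 = 0 then v 0 = 0 ∧ v 1 = 0 ∧ v 2 ≠ 0 else v 3 * v 2 = g (v 3 * v 0, v 3 * v 1)}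

section Suspension

variable {g : ZMod 3 × ZMod 3 → ZMod 3} {v w x y z : Fin 4 → ZMod 3}

lemma mem_suspension_of_eq_zero (hv : v 3 = 0) :
    v ∈ suspension g ↔ v 0 = 0 ∧ v 1 = 0 ∧ v 2 ≠ 0 := by
  simp [suspension, hv]

lemma mem_suspension_of_ne_zero (hv : v 3 ≠ 0) :
    v ∈ suspension g ↔ v 3 * v 2 = g (v 3 * v 0, v 3 * v 1) := by
  simp [suspension, hv]

lemma neg_mem_suspension (hv : v ∈ suspension g) : -v ∈ suspension g := by
  simpa [suspension] using hv

lemma zero_notMem_suspension : 0 ∉ suspension g := by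
  simp [suspension]

lemma graph_mem_suspension (w : ZMod 3 × ZMod 3) : ![w.1, w.2, g w, 1] ∈ suspension g := by
  simp [suspension]

lemma mem_suspension_iff_eq_or_eq_neg (hv : v 3 = 0) :
    v ∈ suspension g ↔ v = Pi.single 2 1 ∨ v = -Pi.single 2 1 := by
  rw [mem_suspension_of_eq_zero hv]
  constructor
  · rintro ⟨h₀, h₁, h₂⟩
    have hcases : ∀ a : ZMod 3, a ≠ 0 → a = 1 ∨ a = -1 := by decide
    refine (hcases (v 2) h₂).imp ?_ ?_ <;> intro h <;> ext i <;> fin_cases i <;>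
      simp [h₀, h₁, h, hv]
  · rintro (rfl | rfl) <;> simp

lemma eq_of_mem_suspension (hx : x ∈ suspension g) (hy : y ∈ suspension g) (hx₃ : x 3 ≠ 0)
    (h₀ : x 0 = y 0) (h₁ : x 1 = y 1) (h₃ : x 3 = y 3) : x = y := by
  have hy₃ : y 3 ≠ 0 := h₃ ▸ hx₃
  rw [mem_suspension_of_ne_zero hx₃] at hx
  rw [mem_suspension_of_ne_zero hy₃, ← h₀, ← h₁, ← h₃, ← hx] at hy
  have h₂ : x 2 = y 2 := (mul_left_cancel₀ hx₃ hy).symm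
  ext i
  fin_cases i <;> assumption

lemma suspension_injective : Function.Injective suspension := by
  intro g g' h
  ext w
  have hw := h ▸ graph_mem_suspension (g := g) w
  simpa [suspension] using hw

-- The points `y` and `-z` lie over the same point of the base plane, hence are equal.
lemma add_add_ne_zero_of_mem_suspension (hx : x ∈ suspension g) (hy : y ∈ suspension g)
    (hz : z ∈ suspension g) (hx₃ : x 3 = 0) (hy₃ : y 3 ≠ 0) : x + y + z ≠ 0 := by
  intro hsum
  obtain ⟨h₀, h₁, -⟩ := (mem_suspension_of_eq_zero hx₃).mp hx
  have hcoord (i) : x i + y i + z i = 0 := congrFun hsum i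
  have hyz : y = -z := eq_of_mem_suspension hy (neg_mem_suspension hz) hy₃
    (by simpa [h₀, eq_neg_iff_add_eq_zero] using hcoord 0)
    (by simpa [h₁, eq_neg_iff_add_eq_zero] using hcoord 1)
    (by simpa [hx₃, eq_neg_iff_add_eq_zero] using hcoord 3)
  have hx0 : x = 0 := by simpa [hyz] using hsum
  exact zero_notMem_suspension (hx0 ▸ hx)

lemma isCap_suspension (hg : LineSumNeZero g) : IsCap (suspension g) := by
  intro x hx y hy z hz hxy hxz hyz hsum
  by_cases hx₃ : x 3 = 0
  · have hy₃ : y 3 = 0 := not_not.mp fun h => add_add_ne_zero_of_mem_suspension hx hy hz hx₃ h hsum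
    have hz₃ : z 3 = 0 := not_not.mp fun h =>
      add_add_ne_zero_of_mem_suspension hx hz hy hx₃ h (add_right_comm x y z ▸ hsum)
    rw [mem_suspension_iff_eq_or_eq_neg ‹_›] at hx hy hz
    grind
  · have hy₃ : y 3 ≠ 0 := fun h =>
      add_add_ne_zero_of_mem_suspension hy hx hz h hx₃ (add_comm x y ▸ hsum)
    have hz₃ : z 3 ≠ 0 := fun h =>
      add_add_ne_zero_of_mem_suspension hz hx hy h hx₃ (by rw [← hsum]; abel)
    have hcoord (i) : x i + y i + z i = 0 := congrFun hsum i
    have hlevel : ∀ a b c : ZMod 3, a ≠ 0 → b ≠ 0 → c ≠ 0 → a + b + c = 0 → a = b ∧ a = c := by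
      decide
    obtain ⟨hxy₃, hxz₃⟩ := hlevel _ _ _ hx₃ hy₃ hz₃ (hcoord 3)
    have hx' := (mem_suspension_of_ne_zero hx₃).mp hx
    have hy' := (mem_suspension_of_ne_zero hy₃).mp hy
    have hz' := (mem_suspension_of_ne_zero hz₃).mp hz
    rw [← hxy₃] at hy'
    rw [← hxz₃] at hz'
    refine hg (x 3 * x 0, x 3 * x 1) (x 3 * y 0, x 3 * y 1) (x 3 * z 0, x 3 * z 1) ?_ ?_ ?_
    · simp [← mul_add, hcoord]
    · intro h
      simp only [Prod.mk.injEq, mul_right_inj' hx₃] at h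
      exact hxy (eq_of_mem_suspension hx hy hx₃ h.1 h.2 hxy₃)
    · rw [← hx', ← hy', ← hz', ← mul_add, ← mul_add, hcoord, mul_zero]

lemma lineSumNeZero_of_isCap_suspension (hg : IsCap (suspension g)) : LineSumNeZero g := by
  intro u v w hsum huv hzero
  have hpoints : ![u.1, u.2, g u, 1] + ![v.1, v.2, g v, 1] + ![w.1, w.2, g w, 1] = 0 := by
    ext i
    fin_cases i
    exacts [congrArg Prod.fst hsum, congrArg Prod.snd hsum, hzero, rfl]
  have h := ((hg.add_add_eq_zero_iff (graph_mem_suspension u) (graph_mem_suspension v)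
    (graph_mem_suspension w)).mp hpoints).1
  exact huv (Prod.ext (congrFun h 0) (congrFun h 1))

lemma sectionCard_suspension_zero : sectionCard (suspension g) (Pi.single 3 1) 0 = 2 := by
  have hpoles : ({v ∈ suspension g | (Pi.single 3 1 : Fin 4 → ZMod 3) ⬝ᵥ v = 0} : Finset _) =
      {Pi.single 2 1, -Pi.single 2 1} := by
    ext v
    rw [mem_filter, single_one_dotProduct, mem_insert, mem_singleton]
    constructor
    · rintro ⟨hv, hv₃⟩
      exact (mem_suspension_iff_eq_or_eq_neg hv₃).mp hv
    · intro hv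
      have hv₃ : v 3 = 0 := by rcases hv with rfl | rfl <;> simp
      exact ⟨(mem_suspension_iff_eq_or_eq_neg hv₃).mpr hv, hv₃⟩
  rw [sectionCard, hpoles]
  exact card_pair (by decide)

lemma sectionCard_suspension_of_ne_zero {c : ZMod 3} (hc : c ≠ 0) :
    sectionCard (suspension g) (Pi.single 3 1) c = 9 := by
  have hcc : c * c = 1 := by decide +revert
  have hcard : #(univ : Finset (ZMod 3 × ZMod 3)) = 9 := by simp
  rw [sectionCard, ← hcard]
  refine card_bij (fun v _ => (v 0, v 1)) (fun v _ => mem_univ _) ?_ ?_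
  · intro v hv w hw h
    simp only [mem_filter, single_one_dotProduct, Prod.mk.injEq] at hv hw h
    exact eq_of_mem_suspension hv.1 hw.1 (hv.2 ▸ hc) h.1 h.2 (hv.2.trans hw.2.symm)
  · intro w _
    refine ⟨![w.1, w.2, c * g (c * w.1, c * w.2), c], ?_, by simp⟩
    simp [suspension, hc, ← mul_assoc, hcc]

lemma zeroAnchoredCap_suspension (hg : LineSumNeZero g) : ZeroAnchoredCap (suspension g) where
  isCap := isCap_suspension hg
  card_eq := by
    rw [← sectionCard_add_add _ (Pi.single 3 1), sectionCard_suspension_zero,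
      sectionCard_suspension_of_ne_zero (by decide), sectionCard_suspension_of_ne_zero (by decide)]
  sum_eq_zero :=
    sum_involution (fun v _ => -v) (fun v _ => add_neg_cancel v)
      (fun v _ hv hfix => hv (eq_zero_of_neg_eq_self hfix)) (fun v hv => neg_mem_suspension hv)
      fun v _ => neg_neg v

end Suspension

namespace ZeroAnchoredCap

variable {S : Finset (Fin 4 → ZMod 3)}

-- Otherwise `y - x` is one of the poles, so that `x`, `-y`, `y - x` is a line in `S`.
lemma eq_of_pole_mem (hS : ZeroAnchoredCap S) (hpole : Pi.single 2 1 ∈ S) {x y : Fin 4 → ZMod 3}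
    (hx : x ∈ S) (hy : y ∈ S) (hx₃ : x 3 = 1) (hy₃ : y 3 = 1) (h₀ : x 0 = y 0)
    (h₁ : x 1 = y 1) : x = y := by
  by_contra hxy
  have h₃ : (y - x) 3 = 0 := by simp [hx₃, hy₃]
  have h₂ : x 2 ≠ y 2 := fun h₂ =>
    hxy (funext fun i => by fin_cases i; exacts [h₀, h₁, h₂, hx₃.trans hy₃.symm])
  have hsuspension : y - x ∈ suspension 0 :=
    (mem_suspension_of_eq_zero h₃).mpr
      ⟨sub_eq_zero.mpr h₀.symm, sub_eq_zero.mpr h₁.symm, sub_ne_zero.mpr h₂.symm⟩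
  have hdiff : y - x ∈ S := by
    rcases (mem_suspension_iff_eq_or_eq_neg h₃).mp hsuspension with h | h <;> rw [h]
    exacts [hpole, hS.neg_mem hpole]
  have hopp : x = -y := ((hS.isCap.add_add_eq_zero_iff hx (hS.neg_mem hy) hdiff).mp (by abel)).1
  have hone : x 3 = -y 3 := congrFun hopp 3
  exact absurd hone (by rw [hx₃, hy₃]; decide)

lemma exists_mem_of_pole_mem (hS : ZeroAnchoredCap S) (hpole : Pi.single 2 1 ∈ S)
    (hsection : sectionCard S (Pi.single 3 1) 0 = 2) (w : ZMod 3 × ZMod 3) :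
    ∃ a, ![w.1, w.2, a, 1] ∈ S := by
  have hcard : #(univ : Finset (ZMod 3 × ZMod 3)) ≤ sectionCard S (Pi.single 3 1) 1 := by
    have hadd := hS.sectionCard_add_add (Pi.single 3 1)
    have hsymm := hS.sectionCard_one_eq_two (Pi.single 3 1)
    have huniv : #(univ : Finset (ZMod 3 × ZMod 3)) = 9 := by simp
    lia
  have hinj : Set.InjOn (fun x : Fin 4 → ZMod 3 => (x 0, x 1))
      ({x ∈ S | Pi.single 3 1 ⬝ᵥ x = 1} : Finset (Fin 4 → ZMod 3)) := by
    intro x hx y hy h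
    simp only [coe_filter, Set.mem_ofPred_eq, single_one_dotProduct, Prod.mk.injEq] at hx hy h
    exact hS.eq_of_pole_mem hpole hx.1 hy.1 hx.2 hy.2 h.1 h.2
  obtain ⟨x, hx, rfl⟩ :=
    surjOn_of_injOn_of_card_le _ (fun x _ => mem_univ _) hinj hcard (mem_univ w)
  simp only [coe_filter, Set.mem_ofPred_eq, single_one_dotProduct] at hx
  refine ⟨x 2, ?_⟩
  convert hx.1 using 1
  ext i
  fin_cases i
  exacts [rfl, rfl, rfl, hx.2.symm]

lemma exists_suspension_eq (hS : ZeroAnchoredCap S) (hpole : Pi.single 2 1 ∈ S)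
    (hsection : sectionCard S (Pi.single 3 1) 0 = 2) : ∃ g, LineSumNeZero g ∧ suspension g = S := by
  choose g hg using hS.exists_mem_of_pole_mem hpole hsection
  have hsubset : suspension g ⊆ S := by
    intro v hv
    by_cases hv₃ : v 3 = 0
    · rcases (mem_suspension_iff_eq_or_eq_neg hv₃).mp hv with rfl | rfl
      exacts [hpole, hS.neg_mem hpole]
    · have hlevel := hg (v 3 * v 0, v 3 * v 1)
      rw [← (mem_suspension_of_ne_zero hv₃).mp hv] at hlevel
      have hcases : ∀ a : ZMod 3, a ≠ 0 → a = 1 ∨ a = -1 := by decide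
      obtain h | h := hcases _ hv₃
      · have hpoint : ![v 3 * v 0, v 3 * v 1, v 3 * v 2, 1] = v := by
          ext i
          fin_cases i <;> simp [h]
        exact hpoint ▸ hlevel
      · have hpoint : -![v 3 * v 0, v 3 * v 1, v 3 * v 2, 1] = v := by
          ext i
          fin_cases i <;> simp [h]
        exact hpoint ▸ hS.neg_mem hlevel
  have hline := lineSumNeZero_of_isCap_suspension (hS.isCap.subset hsubset)
  refine ⟨g, hline, eq_of_subset_of_card_le hsubset ?_⟩
  rw [hS.card_eq, (zeroAnchoredCap_suspension hline).card_eq]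

end ZeroAnchoredCap

open Classical in
lemma card_zeroAnchoredCap_of_pole_mem :
    #{S | ZeroAnchoredCap S ∧ Pi.single 2 1 ∈ S ∧ sectionCard S (Pi.single 3 1) 0 = 2} = 162 := by
  rw [← card_lineSumNeZero, ← card_image_of_injective _ suspension_injective]
  refine congrArg card (ext fun S => ?_)
  simp only [mem_filter_univ, mem_image]
  constructor
  · rintro ⟨hS, hpole, hsection⟩
    exact hS.exists_suspension_eq hpole hsection
  · rintro ⟨g, hg, rfl⟩
    exact ⟨zeroAnchoredCap_suspension hg,
      (mem_suspension_iff_eq_or_eq_neg (by simp)).mpr (.inl rfl), sectionCard_suspension_zero⟩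

/-! ### Counting over all flags -/

section Flags

variable {K V : Type*} [Field K] [AddCommGroup V] [Module K V]

lemma exists_linearEquiv_of_pairing_eq_zero {v v' : V} {f f' : Dual K V} (hv : v ≠ 0) (hf : f ≠ 0)
    (hfv : f v = 0) (hv' : v' ≠ 0) (hf' : f' ≠ 0) (hfv' : f' v' = 0) :
    ∃ e : V ≃ₗ[K] V, e v = v' ∧ ∀ x, f' (e x) = f x := by
  obtain ⟨ι, b, i, j, hij, rfl, rfl⟩ := exists_basis_of_pairing_eq_zero hfv hf hv
  obtain ⟨ι', b', i', j', hij', rfl, rfl⟩ := exists_basis_of_pairing_eq_zero hfv' hf' hv'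
  have hperm := Equiv.Perm.isMultiplyPretransitive ι' 2
  rw [MulAction.is_two_pretransitive_iff] at hperm
  obtain ⟨τ, hi, hj⟩ := hperm ((b.indexEquiv b').injective.ne hij) hij'
  let σ : ι ≃ ι' := (b.indexEquiv b').trans τ
  replace hi : σ i = i' := hi
  replace hj : σ j = j' := hj
  let c := b'.reindex σ.symm
  refine ⟨b.repr.trans c.repr.symm, by simp [c, hi], fun x => ?_⟩
  have hrepr : c.repr (c.repr.symm (b.repr x)) j = b.repr x j := by
    rw [LinearEquiv.apply_symm_apply]
  simpa [c, hj] using hrepr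

end Flags

section FiniteField

variable {K : Type*} [Field K] [Fintype K] [DecidableEq K]

/-- The incident pairs of a nonzero vector `p` and a linear hyperplane `{x | f ⬝ᵥ x = 0}`, the
hyperplane being encoded by a nonzero `f`, so that each incidence is counted `#K - 1` times.
Irreducible, as unification would otherwise enumerate the vectors. -/
@[irreducible] def flags (K : Type*) [Field K] [Fintype K] [DecidableEq K] (n : ℕ) :
    Finset ((Fin n → K) × (Fin n → K)) :=
  {q ∈ {0}ᶜ ×ˢ {0}ᶜ | q.2 ⬝ᵥ q.1 = 0}

lemma mem_flags {p f : Fin n → K} : (p, f) ∈ flags K n ↔ (p ≠ 0 ∧ f ≠ 0) ∧ f ⬝ᵥ p = 0 := by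
  simp [flags]

lemma card_flags :
    #(flags K (n + 1)) = (Fintype.card K ^ (n + 1) - 1) * (Fintype.card K ^ n - 1) := by
  have hfiber (p : Fin (n + 1) → K) (hp : p ∈ ({0}ᶜ : Finset _)) :
      #{f ∈ {0}ᶜ | f ⬝ᵥ p = 0} = Fintype.card K ^ n - 1 := by
    rw [← card_filter_dotProduct_eq (by simpa using hp) 0, ← card_erase_of_mem (a := 0) (by simp)]
    congr 1
    ext f
    simp
  rw [flags, card_filter, sum_product]
  simp only [← card_filter]
  rw [sum_congr rfl hfiber, sum_const, smul_eq_mul]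
  simp [card_compl]

end FiniteField

section Map

variable {m : ℕ} {S : Finset (Fin m → ZMod 3)} (e : (Fin m → ZMod 3) ≃+ (Fin n → ZMod 3))

lemma IsCap.map (hS : IsCap S) : IsCap (S.map e.toEquiv.toEmbedding) := by
  intro x hx y hy z hz hxy hxz hyz hsum
  rw [mem_map_equiv] at hx hy hz
  have hne {u v : Fin n → ZMod 3} : u ≠ v → e.symm u ≠ e.symm v := e.symm.injective.ne
  refine hS _ hx _ hy _ hz (hne hxy) (hne hxz) (hne hyz) ?_
  simpa using congrArg e.symm hsum

lemma sectionCard_map {f : Fin m → ZMod 3} {f' : Fin n → ZMod 3} (h : ∀ x, f' ⬝ᵥ e x = f ⬝ᵥ x)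
    (c : ZMod 3) : sectionCard (S.map e.toEquiv.toEmbedding) f' c = sectionCard S f c := by
  simp [sectionCard, filter_map, Function.comp_def, h]

end Map

section Flags

variable {S : Finset (Fin 4 → ZMod 3)}

lemma ZeroAnchoredCap.map (hS : ZeroAnchoredCap S) (e : (Fin 4 → ZMod 3) ≃+ (Fin 4 → ZMod 3)) :
    ZeroAnchoredCap (S.map e.toEquiv.toEmbedding) where
  isCap := hS.isCap.map e
  card_eq := by rw [card_map, hS.card_eq]
  sum_eq_zero := by
    rw [sum_map]
    simpa [hS.sum_eq_zero] using (map_sum e (fun x => x) S).symm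

lemma zeroAnchoredCap_map_iff (e : (Fin 4 → ZMod 3) ≃+ (Fin 4 → ZMod 3)) :
    ZeroAnchoredCap (S.map e.toEquiv.toEmbedding) ↔ ZeroAnchoredCap S := by
  refine ⟨fun h => ?_, fun h => h.map e⟩
  convert h.map e.symm
  ext x
  simp

lemma ZeroAnchoredCap.filter_flags (hS : ZeroAnchoredCap S) :
    {q ∈ flags (ZMod 3) 4 | q.1 ∈ S ∧ sectionCard S q.2 0 = 2} =
      {q ∈ S ×ˢ ({f | sectionCard S f 0 = 2} : Finset _) | q.2 ⬝ᵥ q.1 = 0} := by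
  ext ⟨p, f⟩
  rw [mem_filter, mem_flags, mem_filter, mem_product, mem_filter_univ]
  constructor
  · rintro ⟨⟨-, hincident⟩, hp, htangent⟩
    exact ⟨⟨hp, htangent⟩, hincident⟩
  · rintro ⟨⟨hp, htangent⟩, hincident⟩
    refine ⟨⟨⟨ne_of_mem_of_not_mem hp hS.zero_notMem, ?_⟩, hincident⟩, hp, htangent⟩
    rintro rfl
    rw [sectionCard_zero_left, hS.card_eq] at htangent
    contradiction

lemma ZeroAnchoredCap.card_tangent_flags (hS : ZeroAnchoredCap S) :
    #{q ∈ flags (ZMod 3) 4 | q.1 ∈ S ∧ sectionCard S q.2 0 = 2} = 40 := by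
  have hfiber (f) (hf : f ∈ ({f | sectionCard S f 0 = 2} : Finset (Fin 4 → ZMod 3))) :
      #{x ∈ S | f ⬝ᵥ x = 0} = 2 :=
    (mem_filter.mp hf).2
  rw [hS.filter_flags, card_filter, sum_product_right]
  simp only [← card_filter]
  rw [sum_congr rfl hfiber, sum_const, hS.card_filter_sectionCard_eq_two, smul_eq_mul]

end Flags

open Classical in
lemma card_zeroAnchoredCap_of_mem_flags {p f : Fin 4 → ZMod 3} (h : (p, f) ∈ flags (ZMod 3) 4) :
    #{S | ZeroAnchoredCap S ∧ p ∈ S ∧ sectionCard S f 0 = 2} = 162 := by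
  have hstd : (Pi.single 2 1, Pi.single 3 1) ∈ flags (ZMod 3) 4 := by
    simp [mem_flags]
  rw [← card_zeroAnchoredCap_of_pole_mem]
  obtain ⟨⟨hp, hf⟩, hfp⟩ := mem_flags.mp h
  obtain ⟨⟨hp', hf'⟩, hfp'⟩ := mem_flags.mp hstd
  let D := dotProductEquiv (ZMod 3) (Fin 4)
  obtain ⟨e, hep, hef⟩ := exists_linearEquiv_of_pairing_eq_zero (f := D f)
    (f' := D (Pi.single 3 1)) hp (D.map_ne_zero_iff.mpr hf) hfp hp' (D.map_ne_zero_iff.mpr hf') hfp'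
  let e' := e.toAddEquiv
  have hsection (S : Finset (Fin 4 → ZMod 3)) :
      sectionCard (S.map e'.toEquiv.toEmbedding) (Pi.single 3 1) 0 = sectionCard S f 0 :=
    sectionCard_map e' hef 0
  have hpole (S : Finset (Fin 4 → ZMod 3)) :
      Pi.single 2 1 ∈ S.map e'.toEquiv.toEmbedding ↔ p ∈ S := by
    rw [← hep]
    exact mem_map' _
  refine card_equiv e'.toEquiv.finsetCongr fun S => ?_
  rw [mem_filter_univ, mem_filter_univ, Equiv.finsetCongr_apply, zeroAnchoredCap_map_iff, hpole,
    hsection]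

open Classical in
lemma card_zeroAnchoredCap : #{S | ZeroAnchoredCap S} = 8424 := by
  have hcap (S) (hS : S ∈ ({S | ZeroAnchoredCap S} : Finset (Finset (Fin 4 → ZMod 3)))) :
      #{q ∈ flags (ZMod 3) 4 | q.1 ∈ S ∧ sectionCard S q.2 0 = 2} = 40 :=
    ((mem_filter_univ S).mp hS).card_tangent_flags
  have hflag (q) (hq : q ∈ flags (ZMod 3) 4) :
      #{S ∈ ({S | ZeroAnchoredCap S} : Finset (Finset (Fin 4 → ZMod 3))) |
        q.1 ∈ S ∧ sectionCard S q.2 0 = 2} = 162 := by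
    rw [filter_filter]
    exact card_zeroAnchoredCap_of_mem_flags hq
  have hcount := card_mul_eq_card_mul _ hcap hflag
  rw [card_flags, ZMod.card] at hcount
  omega

lemma exists_zeroAnchoredCap : ∃ S, ZeroAnchoredCap S := by
  classical
  have hpos : 0 < #{S | ZeroAnchoredCap S} := by rw [card_zeroAnchoredCap]; norm_num
  obtain ⟨S, hS⟩ := card_pos.mp hpos
  exact ⟨S, (mem_filter_univ S).mp hS⟩

lemma zeroAnchoredCap_iff {S : Finset (Fin 4 → ZMod 3)} :
    ZeroAnchoredCap S ↔ MaximalCap S ∧ ∑ x ∈ S, x = 0 := by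
  constructor
  · intro hS
    exact ⟨⟨hS.isCap, fun D hD => hS.card_eq ▸ hD.card_le_twenty⟩, hS.sum_eq_zero⟩
  · rintro ⟨⟨hcap, hmax⟩, hsum⟩
    obtain ⟨T, hT⟩ := exists_zeroAnchoredCap
    exact ⟨hcap, hcap.card_le_twenty.antisymm (hT.card_eq ▸ hmax T hT.isCap), hsum⟩

end

/-- There are exactly 8424 maximal caps in `AG(4,3)` whose anchor `-∑ x ∈ S, x` is the
zero vector (equivalently, whose points sum to zero). -/
theorem card_maximal_caps_AG43_anchor_zero :
    Nat.card {S : Finset (Fin 4 → ZMod 3) // MaximalCap S ∧ ∑ x ∈ S, x = 0} = 8424 := by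
  classical
  rw [← card_zeroAnchoredCap]
  exact Nat.subtype_card _ fun S => by rw [Finset.mem_filter_univ, zeroAnchoredCap_iff]
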